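/- Fix θ ∈ ℝ and σ > 0, and let ψ_{M,θ}(α) = Φ_M(v)(θ−α) + φ_M(v)σ with v = (θ−α)/σ. Then for every β ∈ (−1, 0), sup_{α∈ℝ}(βα − ψ_{M,θ}(α)) = βθ − (σ/2)·√(1 − (2β+1)²). -/

import Mathlib

/-- Φ_M(v) = (1 + v/√(1+v²))/2. -/
noncomputable def PhiM (v : ℝ) : ℝ := (1 + v / Real.sqrt (1 + v ^ 2)) / 2

/-- φ_M(v) = 1/(2√(1+v²)). -/
noncomputable def phiM (v : ℝ) : ℝ := 1 / (2 * Real.sqrt (1 + v ^ 2))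

/-!
In the standardized variable `v = (θ - α) / σ` the loss is `σ (v + √(1 + v²)) / 2`, so the objective
`β α - ψ(α)` equals `β θ - (σ / 2) (c v + √(1 + v²))` with `c = 2 β + 1 ∈ (-1, 1)`.
By Cauchy–Schwarz, `√(1 - c²) · 1 + (-c) · v ≤ √(1 + v²)`, with equality when `(1, v)` is
proportional to `(√(1 - c²), -c)`. Hence `√(1 - c²)` is the minimum of `c v + √(1 + v²)`.
-/

theorem PhiM_mul_add_phiM (v : ℝ) : PhiM v * v + phiM v = (v + √(1 + v ^ 2)) / 2 := by
  have hsq : √(1 + v ^ 2) ^ 2 = 1 + v ^ 2 := Real.sq_sqrt (by positivity)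
  rw [PhiM, phiM]
  field_simp
  linear_combination -hsq

theorem mul_sub_loss_eq {σ : ℝ} (hσ : σ ≠ 0) (θ β α : ℝ) :
    β * α - (PhiM ((θ - α) / σ) * (θ - α) + phiM ((θ - α) / σ) * σ) =
      β * θ - σ / 2 * ((2 * β + 1) * ((θ - α) / σ) + √(1 + ((θ - α) / σ) ^ 2)) := by
  have hloss := PhiM_mul_add_phiM ((θ - α) / σ)
  have hα : θ - α = σ * ((θ - α) / σ) := by field_simp
  linear_combination -σ * hloss - (PhiM ((θ - α) / σ) + β) * hα

theorem sqrt_one_sub_sq_le_mul_add_sqrt_one_add_sq {c : ℝ} (hc : |c| ≤ 1) (v : ℝ) :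
    √(1 - c ^ 2) ≤ c * v + √(1 + v ^ 2) := by
  have hsq : √(1 - c ^ 2) ^ 2 = 1 - c ^ 2 :=
    Real.sq_sqrt (sub_nonneg.mpr ((sq_le_one_iff_abs_le_one c).mpr hc))
  have cauchy_schwarz : √(1 - c ^ 2) - c * v ≤ √(1 + v ^ 2) := by
    apply Real.le_sqrt_of_sq_le
    linear_combination sq_nonneg (√(1 - c ^ 2) * v + c) + (1 + v ^ 2) * hsq
  linarith

theorem sqrt_one_add_div_sqrt_one_sub_sq_sq {c : ℝ} (hc : |c| < 1) :
    √(1 + (c / √(1 - c ^ 2)) ^ 2) = (√(1 - c ^ 2))⁻¹ := by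
  have hpos : 0 < 1 - c ^ 2 := sub_pos.mpr ((sq_lt_one_iff_abs_lt_one c).mpr hc)
  rw [← Real.sqrt_inv, div_pow, Real.sq_sqrt hpos.le]
  congr 1
  field_simp
  ring

theorem isLeast_range_mul_add_sqrt_one_add_sq {c : ℝ} (hc : |c| < 1) :
    IsLeast (Set.range fun v : ℝ => c * v + √(1 + v ^ 2)) √(1 - c ^ 2) := by
  refine ⟨⟨-(c / √(1 - c ^ 2)), ?_⟩, ?_⟩
  · calc c * -(c / √(1 - c ^ 2)) + √(1 + (-(c / √(1 - c ^ 2))) ^ 2)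
        = c * -(c / √(1 - c ^ 2)) + (√(1 - c ^ 2))⁻¹ := by
          rw [neg_sq, sqrt_one_add_div_sqrt_one_sub_sq_sq hc]
      _ = (1 - c ^ 2) / √(1 - c ^ 2) := by ring
      _ = √(1 - c ^ 2) := Real.div_sqrt
  · rintro _ ⟨v, rfl⟩
    exact sqrt_one_sub_sq_le_mul_add_sqrt_one_add_sq hc.le v

theorem stmt_19 (θ σ : ℝ) (hσ : 0 < σ) (β : ℝ) (hβ : β ∈ Set.Ioo (-1 : ℝ) 0) :
    (⨆ α : ℝ,
        (β * α - (PhiM ((θ - α) / σ) * (θ - α) + phiM ((θ - α) / σ) * σ))) =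
      β * θ - (σ / 2) * Real.sqrt (1 - (2 * β + 1) ^ 2) := by
  have hc : |2 * β + 1| < 1 := abs_lt.mpr ⟨by linarith [hβ.1], by linarith [hβ.2]⟩
  have hsurj : Function.Surjective fun α : ℝ => (θ - α) / σ :=
    fun v => ⟨θ - σ * v, by field_simp; ring⟩
  have hanti : Antitone fun x : ℝ => β * θ - σ / 2 * x := fun _ _ hxy => by dsimp only; gcongr
  have hmax := hanti.map_isLeast (isLeast_range_mul_add_sqrt_one_add_sq hc)
  rw [← Set.range_comp] at hmax
  simp_rw [mul_sub_loss_eq hσ.ne']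
  exact (hsurj.iSup_comp _).trans hmax.csSup_eq
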